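/- (Continuity of the solution operator) Suppose 𝒢: C([a,b],ℝ) → ℝ is continuous, f(·,u) is measurable for each u ∈ ℝ, |f(t,x)−f(t,y)| ≤ κ₂(t)·|Φ(x,y)| for all t ∈ (a,b) and x, y ∈ ℝ, where κ₂: (a,b) → [0,∞) is measurable with ψ'·κ₂ ∈ L¹(a,b), and Φ: ℝ×ℝ → ℝ is continuous with the property that for every ε > 0 there is δ > 0 such that |x−y| < δ implies |Φ(x,y)| < ε, and additionally |f(t,x)| ≤ κ₁(t)·Ψ(|x|) with κ₁ measurable, ψ'·κ₁ ∈ L¹(a,b) and Ψ: [0,∞) → [0,∞) nondecreasing (so that S is well defined). Then the operator S maps C([a,b],ℝ) into C([a,b],ℝ) and is continuous with respect to the supremum norm; in particular ‖Sx − Sy‖ ≤ |𝒢(x)−𝒢(y)| + G_max·(sup_{τ∈[a,b]} |Φ(x(τ),y(τ))|)·∫_a^b ψ'(τ)κ₂(τ) dτ, where G_max = L^{α+β−1}/Γ(α+β). -/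

import Mathlib

open MeasureTheory Set

/-- The Green function of the sequential fractional boundary value problem. -/
noncomputable def G (a b α β : ℝ) (ψ : ℝ → ℝ) (τ t : ℝ) : ℝ :=
  if τ ≤ t then
    (ψ t - ψ a) ^ β * (ψ b - ψ τ) ^ (α + β - 1) /
        (Real.Gamma (α + β) * (ψ b - ψ a) ^ β) -
      (ψ t - ψ τ) ^ (α + β - 1) / Real.Gamma (α + β)
  else
    (ψ t - ψ a) ^ β * (ψ b - ψ τ) ^ (α + β - 1) /
      (Real.Gamma (α + β) * (ψ b - ψ a) ^ β)

/-- The supremum norm of a function over the interval `[a,b]`. -/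
noncomputable def supNorm (a b : ℝ) (x : ℝ → ℝ) : ℝ :=
  ⨆ t : Set.Icc a b, |x ↑t|

/-- The solution operator `S` of the boundary value problem. -/
noncomputable def Sop (a b α β : ℝ) (ψ ψd : ℝ → ℝ) (f : ℝ → ℝ → ℝ)
    (𝒢 : (ℝ → ℝ) → ℝ) (x : ℝ → ℝ) (t : ℝ) : ℝ :=
  ((ψ t - ψ a) / (ψ b - ψ a)) ^ β * 𝒢 x +
    ∫ τ in a..b, G a b α β ψ τ t * ψd τ * f τ (x τ)

/-!
The weight `ψ'` is absorbed into the nonlinearity: `F τ u = ψ' τ * f τ u` satisfies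
`|F τ u - F τ v| ≤ k τ * |Φ u v|` with `k = ψ' * κ₂` integrable. As `Φ` vanishes on the diagonal,
this makes `F τ` continuous, so `F` is a Carathéodory function, and comparison with `F τ 0` makes
`τ ↦ F τ (x τ)` integrable for every continuous `x`. Writing the second branch of the Green
function with `max (ψ t - ψ τ) 0` shows that `G` is jointly continuous, and a difference of two
numbers in `[0, Gmax]`. Continuity of `S x` is then dominated convergence, the estimate is the
triangle inequality, and continuity of `S` follows since `Φ` is uniformly small near a compact
piece of the diagonal.
-/

section Superposition

variable {Ω E F : Type*} [MeasurableSpace Ω] {μ : Measure Ω}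

theorem continuous_of_dist_le [TopologicalSpace E] [PseudoMetricSpace F] {g : E → F}
    {φ : E → E → ℝ} (hφ : ∀ v, Continuous fun u => φ u v) (hφ_diag : ∀ u, φ u u = 0)
    (hg : ∀ u v, dist (g u) (g v) ≤ φ u v) : Continuous g := by
  refine continuous_iff_continuousAt.2 fun v => tendsto_iff_dist_tendsto_zero.2 ?_
  refine squeeze_zero (fun _ => dist_nonneg) (fun u => hg u v) ?_
  simpa only [hφ_diag] using (hφ v).tendsto v

theorem aestronglyMeasurable_comp_simpleFunc [TopologicalSpace F]
    [TopologicalSpace.PseudoMetrizableSpace F] {f : Ω → E → F}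
    (hf : ∀ u, AEStronglyMeasurable (fun τ => f τ u) μ) (s : SimpleFunc Ω E) :
    AEStronglyMeasurable (fun τ => f τ (s τ)) μ := by
  have h_cover : ⋃ u : s.range, s ⁻¹' {u.1} = univ :=
    eq_univ_of_forall fun τ => mem_iUnion.2 ⟨⟨s τ, s.mem_range_self τ⟩, rfl⟩
  rw [← Measure.restrict_univ (μ := μ), ← h_cover, aestronglyMeasurable_iUnion_iff]
  refine fun u => (hf u).restrict.congr ?_
  filter_upwards [ae_restrict_mem (s.measurableSet_fiber u)] with τ hτ
  rw [show s τ = u from hτ]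

theorem aestronglyMeasurable_comp_of_continuous [TopologicalSpace E] [TopologicalSpace F]
    [TopologicalSpace.PseudoMetrizableSpace F] {f : Ω → E → F} {x : Ω → E}
    (hf : ∀ u, AEStronglyMeasurable (fun τ => f τ u) μ) (hf_cont : ∀ᵐ τ ∂μ, Continuous (f τ))
    (hx : AEStronglyMeasurable x μ) : AEStronglyMeasurable (fun τ => f τ (x τ)) μ := by
  obtain ⟨x', hx', hxx'⟩ := hx
  have h_lim : AEStronglyMeasurable (fun τ => f τ (x' τ)) μ := by
    refine aestronglyMeasurable_of_tendsto_ae Filter.atTop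
      (fun n => aestronglyMeasurable_comp_simpleFunc hf (hx'.approx n)) ?_
    filter_upwards [hf_cont] with τ hτ
    exact (hτ.tendsto (x' τ)).comp (hx'.tendsto_approx τ)
  refine h_lim.congr ?_
  filter_upwards [hxx'] with τ hτ
  rw [hτ]

theorem integrable_comp_of_norm_sub_le [TopologicalSpace E] [NormedAddCommGroup F]
    {f : Ω → E → F} {k : Ω → ℝ} {φ : E → E → ℝ} {u₀ : E} {x : Ω → E} {C : ℝ}
    (hf : ∀ u, AEStronglyMeasurable (fun τ => f τ u) μ)
    (hf_sub : ∀ᵐ τ ∂μ, ∀ u v, ‖f τ u - f τ v‖ ≤ k τ * φ u v)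
    (hφ : ∀ v, Continuous fun u => φ u v) (hφ_diag : ∀ u, φ u u = 0)
    (hk : Integrable k μ) (hk_nonneg : 0 ≤ᵐ[μ] k) (hf₀ : Integrable (fun τ => f τ u₀) μ)
    (hx : AEStronglyMeasurable x μ) (hxC : ∀ᵐ τ ∂μ, φ u₀ (x τ) ≤ C) :
    Integrable (fun τ => f τ (x τ)) μ := by
  have hf_cont : ∀ᵐ τ ∂μ, Continuous (f τ) := by
    filter_upwards [hf_sub] with τ hτ
    refine continuous_of_dist_le (φ := fun u v => k τ * φ u v)
      (fun v => continuous_const.mul (hφ v)) (fun u => ?_) fun u v => ?_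
    · rw [hφ_diag, mul_zero]
    · exact (dist_eq_norm _ _).trans_le (hτ u v)
  refine integrable_of_norm_sub_le (aestronglyMeasurable_comp_of_continuous hf hf_cont hx) hf₀
    (hk.mul_const C) ?_
  filter_upwards [hf_sub, hk_nonneg, hxC] with τ hτ hkτ hxτ
  exact (hτ u₀ (x τ)).trans (mul_le_mul_of_nonneg_left hxτ hkτ)

theorem integrable_mul_of_abs_le_mul {w g κ : Ω → ℝ} {C : ℝ} (hw : AEStronglyMeasurable w μ)
    (hw_nonneg : 0 ≤ᵐ[μ] w) (hg : AEStronglyMeasurable g μ)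
    (hgκ : ∀ᵐ τ ∂μ, |g τ| ≤ κ τ * C) (hwκ : Integrable (fun τ => w τ * κ τ) μ) :
    Integrable (fun τ => w τ * g τ) μ := by
  refine (hwκ.mul_const C).mono' (hw.mul hg) ?_
  filter_upwards [hw_nonneg, hgκ] with τ hwτ hτ
  rw [Real.norm_eq_abs, abs_mul, abs_of_nonneg hwτ, mul_assoc]
  exact mul_le_mul_of_nonneg_left hτ hwτ

theorem aestronglyMeasurable_of_hasDerivAt [NormedAddCommGroup F] [NormedSpace ℝ F]
    [CompleteSpace F] {ψ ψd : ℝ → F} {s : Set ℝ} {ν : Measure ℝ} (hs : MeasurableSet s)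
    (hψ : ∀ t ∈ s, HasDerivAt ψ (ψd t) t) : AEStronglyMeasurable ψd (ν.restrict s) :=
  (aestronglyMeasurable_deriv ψ _).congr
    (ae_restrict_of_forall_mem hs fun t ht => (hψ t ht).deriv)

end Superposition

section IntegralOperator

variable {Ω : Type*} [MeasurableSpace Ω] {μ : Measure Ω} {M : ℝ}

theorem continuousOn_integral_mul_of_abs_le {X : Type*} [TopologicalSpace X]
    [FirstCountableTopology X] {K : Ω → X → ℝ} {h : Ω → ℝ} {s : Set X}
    (hK : ∀ t ∈ s, AEStronglyMeasurable (fun τ => K τ t) μ)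
    (hK_le : ∀ t ∈ s, ∀ᵐ τ ∂μ, |K τ t| ≤ M) (hK_cont : ∀ᵐ τ ∂μ, ContinuousOn (K τ) s)
    (hh : Integrable h μ) : ContinuousOn (fun t => ∫ τ, K τ t * h τ ∂μ) s := by
  refine continuousOn_of_dominated (bound := fun τ => M * |h τ|)
    (fun t ht => (hK t ht).mul hh.aestronglyMeasurable) (fun t ht => ?_) (hh.abs.const_mul M) ?_
  · filter_upwards [hK_le t ht] with τ hτ
    rw [Real.norm_eq_abs, abs_mul]
    exact mul_le_mul_of_nonneg_right hτ (abs_nonneg _)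
  · filter_upwards [hK_cont] with τ hτ using hτ.mul continuousOn_const

theorem abs_integral_mul_sub_integral_mul_le {K h₁ h₂ g : Ω → ℝ}
    (hK : AEStronglyMeasurable K μ) (hK_le : ∀ᵐ τ ∂μ, |K τ| ≤ M)
    (hh₁ : Integrable h₁ μ) (hh₂ : Integrable h₂ μ) (hg : Integrable g μ)
    (h_sub : ∀ᵐ τ ∂μ, |h₁ τ - h₂ τ| ≤ g τ) :
    |∫ τ, K τ * h₁ τ ∂μ - ∫ τ, K τ * h₂ τ ∂μ| ≤ M * ∫ τ, g τ ∂μ := by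
  rw [← integral_sub (hh₁.bdd_mul hK hK_le) (hh₂.bdd_mul hK hK_le), ← integral_const_mul,
    ← Real.norm_eq_abs]
  refine norm_integral_le_of_norm_le (hg.const_mul M) ?_
  filter_upwards [hK_le, h_sub] with τ hKτ hτ
  rw [← mul_sub, Real.norm_eq_abs, abs_mul]
  exact mul_le_mul hKτ hτ (abs_nonneg _) ((abs_nonneg _).trans hKτ)

end IntegralOperator

section SupNorm

variable {a b : ℝ}

theorem abs_le_supNorm {x : ℝ → ℝ} {t : ℝ} (hx : ContinuousOn x (Icc a b)) (ht : t ∈ Icc a b) :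
    |x t| ≤ supNorm a b x := by
  obtain ⟨C, hC⟩ := isCompact_Icc.exists_bound_of_continuousOn hx
  exact le_ciSup (f := fun s : Icc a b => |x s|) ⟨C, forall_mem_range.2 fun s => hC s s.2⟩ ⟨t, ht⟩

theorem supNorm_le {x : ℝ → ℝ} {C : ℝ} (hab : a ≤ b) (hx : ∀ t ∈ Icc a b, |x t| ≤ C) :
    supNorm a b x ≤ C :=
  have : Nonempty (Icc a b) := ⟨⟨a, left_mem_Icc.2 hab⟩⟩
  ciSup_le fun t => hx t t.2

theorem eq_zero_of_forall_dist_lt_imp_abs_lt {E : Type*} [PseudoMetricSpace E] {Φ : E → E → ℝ}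
    (hΦ : ∀ ε > 0, ∃ δ > 0, ∀ u v, dist u v < δ → |Φ u v| < ε) (u : E) : Φ u u = 0 := by
  refine abs_nonpos_iff.1 (le_of_forall_pos_lt_add fun ε hε => ?_)
  obtain ⟨δ, hδ, hΦδ⟩ := hΦ ε hε
  rw [zero_add]
  exact hΦδ u u ((dist_self u).trans_lt hδ)

theorem exists_forall_abs_lt_of_diagonal {E : Type*} [PseudoMetricSpace E] {Φ : E → E → ℝ}
    {s : Set E} {ε : ℝ} (hΦ : Continuous fun p : E × E => Φ p.1 p.2) (hΦ_diag : ∀ u, Φ u u = 0)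
    (hs : IsCompact s) (hε : 0 < ε) :
    ∃ δ > 0, ∀ u ∈ s, ∀ v, dist u v < δ → |Φ u v| < ε := by
  have h_unif := (hs.image (continuous_id.prodMk continuous_id)).uniformContinuousAt_of_continuousAt
    _ (fun _ _ => hΦ.continuousAt) (Metric.dist_mem_uniformity hε)
  obtain ⟨δ, hδ, h⟩ := Metric.mem_uniformity_dist.1 h_unif
  refine ⟨δ, hδ, fun u hu v huv => ?_⟩
  have h_dist : dist (u, u) (u, v) < δ := by simpa [Prod.dist_eq, hδ] using huv
  simpa [hΦ_diag] using h h_dist (mem_image_of_mem _ hu)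

theorem exists_forall_supNorm_comp_le {Φ : ℝ → ℝ → ℝ} {x : ℝ → ℝ} {ε : ℝ} (hab : a ≤ b)
    (hΦ : Continuous fun p : ℝ × ℝ => Φ p.1 p.2) (hΦ_diag : ∀ u, Φ u u = 0)
    (hx : ContinuousOn x (Icc a b)) (hε : 0 < ε) :
    ∃ δ > 0, ∀ y : ℝ → ℝ, ContinuousOn y (Icc a b) → supNorm a b (fun t => x t - y t) < δ →
      supNorm a b (fun t => Φ (x t) (y t)) ≤ ε := by
  obtain ⟨δ, hδ, hΦδ⟩ := exists_forall_abs_lt_of_diagonal hΦ hΦ_diag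
    (isCompact_Icc.image_of_continuousOn hx) hε
  refine ⟨δ, hδ, fun y hy hxy => supNorm_le hab fun t ht => ?_⟩
  exact (hΦδ _ (mem_image_of_mem x ht) _
    ((abs_le_supNorm (hx.sub hy) ht).trans_lt hxy)).le

theorem exists_forall_supNorm_sub_lt {S : (ℝ → ℝ) → ℝ → ℝ} {𝒢 : (ℝ → ℝ) → ℝ} {Φ : ℝ → ℝ → ℝ}
    {x : ℝ → ℝ} {C ε : ℝ} (hab : a ≤ b)
    (h𝒢 : ∀ ε > 0, ∃ δ > 0, ∀ y : ℝ → ℝ, ContinuousOn y (Icc a b) →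
      supNorm a b (fun t => x t - y t) < δ → |𝒢 x - 𝒢 y| < ε)
    (hΦ : Continuous fun p : ℝ × ℝ => Φ p.1 p.2) (hΦ_diag : ∀ u, Φ u u = 0)
    (hx : ContinuousOn x (Icc a b)) (hC : 0 ≤ C)
    (hS : ∀ y : ℝ → ℝ, ContinuousOn y (Icc a b) → supNorm a b (fun t => S x t - S y t) ≤
      |𝒢 x - 𝒢 y| + C * supNorm a b (fun t => Φ (x t) (y t))) (hε : 0 < ε) :
    ∃ δ > 0, ∀ y : ℝ → ℝ, ContinuousOn y (Icc a b) → supNorm a b (fun t => x t - y t) < δ →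
      supNorm a b (fun t => S x t - S y t) < ε := by
  obtain ⟨η, hη, hCη⟩ := exists_pos_mul_lt (half_pos hε) C
  obtain ⟨δ₁, hδ₁, h𝒢_lt⟩ := h𝒢 (ε / 2) (half_pos hε)
  obtain ⟨δ₂, hδ₂, hΦ_le⟩ := exists_forall_supNorm_comp_le hab hΦ hΦ_diag hx hη
  refine ⟨min δ₁ δ₂, lt_min hδ₁ hδ₂, fun y hy hxy => ?_⟩
  obtain ⟨hxy₁, hxy₂⟩ := lt_min_iff.1 hxy
  calc supNorm a b (fun t => S x t - S y t)
      ≤ |𝒢 x - 𝒢 y| + C * supNorm a b (fun t => Φ (x t) (y t)) := hS y hy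
    _ ≤ |𝒢 x - 𝒢 y| + C * η := by gcongr; exact hΦ_le y hy hxy₂
    _ < ε / 2 + ε / 2 := add_lt_add (h𝒢_lt y hy hxy₁) hCη
    _ = ε := add_halves ε

theorem integrableOn_comp_of_abs_sub_le {F : ℝ → ℝ → ℝ} {k : ℝ → ℝ} {Φ : ℝ → ℝ → ℝ}
    {x : ℝ → ℝ} {u₀ : ℝ}
    (hF : ∀ u, AEStronglyMeasurable (fun τ => F τ u) (volume.restrict (Ioo a b)))
    (hF_sub : ∀ τ ∈ Ioo a b, ∀ u v, |F τ u - F τ v| ≤ k τ * |Φ u v|)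
    (hΦ : Continuous fun p : ℝ × ℝ => Φ p.1 p.2) (hΦ_diag : ∀ u, Φ u u = 0)
    (hk : IntegrableOn k (Ioo a b)) (hk_nonneg : ∀ τ ∈ Ioo a b, 0 ≤ k τ)
    (hF₀ : IntegrableOn (fun τ => F τ u₀) (Ioo a b)) (hx : ContinuousOn x (Icc a b)) :
    IntegrableOn (fun τ => F τ (x τ)) (Ioo a b) := by
  have hΦx : ContinuousOn (fun τ => Φ u₀ (x τ)) (Icc a b) :=
    hΦ.comp_continuousOn (continuousOn_const.prodMk hx)
  exact integrable_comp_of_norm_sub_le (φ := fun u v => |Φ u v|) hF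
    (ae_restrict_of_forall_mem measurableSet_Ioo hF_sub)
    (fun v => (hΦ.comp (continuous_id.prodMk continuous_const)).abs)
    (fun u => abs_eq_zero.2 (hΦ_diag u)) hk
    (ae_restrict_of_forall_mem measurableSet_Ioo hk_nonneg) hF₀
    ((hx.mono Ioo_subset_Icc_self).aestronglyMeasurable measurableSet_Ioo)
    (ae_restrict_of_forall_mem measurableSet_Ioo fun τ hτ =>
      abs_le_supNorm (x := fun τ => Φ u₀ (x τ)) hΦx (Ioo_subset_Icc_self hτ))

end SupNorm

section GreenFunction

variable {a b α β : ℝ} {ψ : ℝ → ℝ} {τ t : ℝ}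

theorem rpow_sub_div_sub_mem_Icc (hβ : 0 ≤ β) (hψ : MonotoneOn ψ (Icc a b)) (hL : ψ a < ψ b)
    (ht : t ∈ Icc a b) : ((ψ t - ψ a) / (ψ b - ψ a)) ^ β ∈ Icc (0 : ℝ) 1 := by
  have hab : a ≤ b := ht.1.trans ht.2
  have hL' : 0 < ψ b - ψ a := sub_pos.2 hL
  have h_left : ψ a ≤ ψ t := hψ (left_mem_Icc.2 hab) ht ht.1
  have h_right : ψ t ≤ ψ b := hψ ht (right_mem_Icc.2 hab) ht.2
  have h_nonneg : 0 ≤ (ψ t - ψ a) / (ψ b - ψ a) := div_nonneg (sub_nonneg.2 h_left) hL'.le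
  exact ⟨Real.rpow_nonneg h_nonneg β,
    Real.rpow_le_one h_nonneg ((div_le_one hL').2 (by linarith)) hβ⟩

theorem continuousOn_rpow_sub_div_sub (hβ : 0 ≤ β) (hψ_cont : ContinuousOn ψ (Icc a b)) :
    ContinuousOn (fun t => ((ψ t - ψ a) / (ψ b - ψ a)) ^ β) (Icc a b) :=
  ((hψ_cont.sub continuousOn_const).div_const _).rpow_const fun _ _ => Or.inr hβ

theorem G_eq_sub_max_rpow (hαβ : α + β ≠ 1) (hψ : MonotoneOn ψ (Icc a b)) (hτ : τ ∈ Icc a b)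
    (ht : t ∈ Icc a b) :
    G a b α β ψ τ t =
      ((ψ t - ψ a) / (ψ b - ψ a)) ^ β * ((ψ b - ψ τ) ^ (α + β - 1) / Real.Gamma (α + β)) -
        max (ψ t - ψ τ) 0 ^ (α + β - 1) / Real.Gamma (α + β) := by
  have hab : a ≤ b := ht.1.trans ht.2
  have h_left : ψ a ≤ ψ t := hψ (left_mem_Icc.2 hab) ht ht.1
  have h_ends : ψ a ≤ ψ b := hψ (left_mem_Icc.2 hab) (right_mem_Icc.2 hab) hab
  rw [Real.div_rpow (sub_nonneg.2 h_left) (sub_nonneg.2 h_ends), div_mul_div_comm,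
    mul_comm (_ ^ β) (Real.Gamma _)]
  unfold G
  split_ifs with hτt
  · rw [max_eq_left (sub_nonneg.2 (hψ hτ ht hτt))]
  · rw [max_eq_right (sub_nonpos.2 (hψ ht hτ (not_le.1 hτt).le)),
      Real.zero_rpow (sub_ne_zero.2 hαβ), zero_div, sub_zero]

theorem abs_G_le (hβ : 0 ≤ β) (hαβ : 1 < α + β) (hψ : MonotoneOn ψ (Icc a b)) (hL : ψ a < ψ b)
    (hτ : τ ∈ Icc a b) (ht : t ∈ Icc a b) :
    |G a b α β ψ τ t| ≤ (ψ b - ψ a) ^ (α + β - 1) / Real.Gamma (α + β) := by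
  have hΓ : 0 ≤ Real.Gamma (α + β) := Real.Gamma_nonneg_of_nonneg (by linarith)
  have hab : a ≤ b := ht.1.trans ht.2
  have h_ratio := rpow_sub_div_sub_mem_Icc hβ hψ hL ht
  have hτ_left : ψ a ≤ ψ τ := hψ (left_mem_Icc.2 hab) hτ hτ.1
  have hτ_right : ψ τ ≤ ψ b := hψ hτ (right_mem_Icc.2 hab) hτ.2
  have ht_right : ψ t ≤ ψ b := hψ ht (right_mem_Icc.2 hab) ht.2
  have h_le : ∀ r, 0 ≤ r → r ≤ ψ b - ψ a → r ^ (α + β - 1) / Real.Gamma (α + β) ≤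
      (ψ b - ψ a) ^ (α + β - 1) / Real.Gamma (α + β) := fun r hr hrL =>
    div_le_div_of_nonneg_right (Real.rpow_le_rpow hr hrL (by linarith)) hΓ
  have h_nonneg : ∀ r : ℝ, 0 ≤ r → 0 ≤ r ^ (α + β - 1) / Real.Gamma (α + β) := fun r hr =>
    div_nonneg (Real.rpow_nonneg hr _) hΓ
  have hbτ : 0 ≤ ψ b - ψ τ := sub_nonneg.2 hτ_right
  rw [G_eq_sub_max_rpow hαβ.ne' hψ hτ ht]
  exact abs_sub_le_of_nonneg_of_le (mul_nonneg h_ratio.1 (h_nonneg _ hbτ))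
    ((mul_le_of_le_one_left (h_nonneg _ hbτ) h_ratio.2).trans (h_le _ hbτ (by linarith)))
    (h_nonneg _ (le_max_right _ _))
    (h_le _ (le_max_right _ _) (max_le (by linarith) (sub_nonneg.2 hL.le)))

theorem continuousOn_G (hβ : 0 ≤ β) (hαβ : 1 < α + β) (hψ : MonotoneOn ψ (Icc a b))
    (hψ_cont : ContinuousOn ψ (Icc a b)) :
    ContinuousOn (fun p : ℝ × ℝ => G a b α β ψ p.1 p.2) (Icc a b ×ˢ Icc a b) := by
  have hψ_fst : ContinuousOn (fun p : ℝ × ℝ => ψ p.1) (Icc a b ×ˢ Icc a b) :=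
    hψ_cont.comp continuousOn_fst fun _ hp => hp.1
  have hψ_snd : ContinuousOn (fun p : ℝ × ℝ => ψ p.2) (Icc a b ×ˢ Icc a b) :=
    hψ_cont.comp continuousOn_snd fun _ hp => hp.2
  have hγ : 0 ≤ α + β - 1 := by linarith
  refine ContinuousOn.congr (.sub (.mul ?_ (.div_const ?_ _)) (.div_const ?_ _))
    fun p hp => G_eq_sub_max_rpow hαβ.ne' hψ hp.1 hp.2
  · exact (continuousOn_rpow_sub_div_sub hβ hψ_cont).comp continuousOn_snd fun _ hp => hp.2
  · exact (continuousOn_const.sub hψ_fst).rpow_const fun _ _ => Or.inr hγ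
  · exact ((hψ_snd.sub hψ_fst).sup continuousOn_const).rpow_const fun _ _ => Or.inr hγ

theorem aestronglyMeasurable_G (hβ : 0 ≤ β) (hαβ : 1 < α + β) (hψ : MonotoneOn ψ (Icc a b))
    (hψ_cont : ContinuousOn ψ (Icc a b)) (ht : t ∈ Icc a b) :
    AEStronglyMeasurable (fun τ => G a b α β ψ τ t) (volume.restrict (Ioo a b)) :=
  (((continuousOn_G hβ hαβ hψ hψ_cont).uncurry_right t ht).mono
    Ioo_subset_Icc_self).aestronglyMeasurable measurableSet_Ioo

theorem ae_abs_G_le (hβ : 0 ≤ β) (hαβ : 1 < α + β) (hψ : MonotoneOn ψ (Icc a b))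
    (hL : ψ a < ψ b) (ht : t ∈ Icc a b) :
    ∀ᵐ τ ∂volume.restrict (Ioo a b),
      |G a b α β ψ τ t| ≤ (ψ b - ψ a) ^ (α + β - 1) / Real.Gamma (α + β) :=
  ae_restrict_of_forall_mem measurableSet_Ioo fun _ hτ =>
    abs_G_le hβ hαβ hψ hL (Ioo_subset_Icc_self hτ) ht

end GreenFunction

section SolutionOperator

variable {a b α β : ℝ} {ψ ψd : ℝ → ℝ} {f : ℝ → ℝ → ℝ} {𝒢 : (ℝ → ℝ) → ℝ} {x y : ℝ → ℝ}

theorem Sop_eq_setIntegral_Ioo (hab : a ≤ b) (t : ℝ) :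
    Sop a b α β ψ ψd f 𝒢 x t = ((ψ t - ψ a) / (ψ b - ψ a)) ^ β * 𝒢 x +
      ∫ τ in Ioo a b, G a b α β ψ τ t * (ψd τ * f τ (x τ)) := by
  simp only [Sop, intervalIntegral.integral_of_le hab, integral_Ioc_eq_integral_Ioo, mul_assoc]

theorem continuousOn_Sop (hab : a ≤ b) (hβ : 0 ≤ β) (hαβ : 1 < α + β)
    (hψ : MonotoneOn ψ (Icc a b)) (hψ_cont : ContinuousOn ψ (Icc a b)) (hL : ψ a < ψ b)
    (hx : IntegrableOn (fun τ => ψd τ * f τ (x τ)) (Ioo a b)) :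
    ContinuousOn (Sop a b α β ψ ψd f 𝒢 x) (Icc a b) := by
  refine ContinuousOn.congr (.add
    ((continuousOn_rpow_sub_div_sub hβ hψ_cont).mul continuousOn_const)
    (continuousOn_integral_mul_of_abs_le
      (M := (ψ b - ψ a) ^ (α + β - 1) / Real.Gamma (α + β)) ?_ ?_ ?_ hx))
    fun t _ => Sop_eq_setIntegral_Ioo hab t
  · exact fun t ht => aestronglyMeasurable_G hβ hαβ hψ hψ_cont ht
  · exact fun t ht => ae_abs_G_le hβ hαβ hψ hL ht
  · exact ae_restrict_of_forall_mem measurableSet_Ioo fun τ hτ =>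
      (continuousOn_G hβ hαβ hψ hψ_cont).uncurry_left τ (Ioo_subset_Icc_self hτ)

theorem supNorm_Sop_sub_le {k : ℝ → ℝ} {C : ℝ} (hab : a ≤ b) (hβ : 0 ≤ β) (hαβ : 1 < α + β)
    (hψ : MonotoneOn ψ (Icc a b)) (hψ_cont : ContinuousOn ψ (Icc a b)) (hL : ψ a < ψ b)
    (hx : IntegrableOn (fun τ => ψd τ * f τ (x τ)) (Ioo a b))
    (hy : IntegrableOn (fun τ => ψd τ * f τ (y τ)) (Ioo a b)) (hk : IntegrableOn k (Ioo a b))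
    (hxy : ∀ τ ∈ Ioo a b, |ψd τ * f τ (x τ) - ψd τ * f τ (y τ)| ≤ k τ * C) :
    supNorm a b (fun t => Sop a b α β ψ ψd f 𝒢 x t - Sop a b α β ψ ψd f 𝒢 y t) ≤
      |𝒢 x - 𝒢 y| +
        (ψ b - ψ a) ^ (α + β - 1) / Real.Gamma (α + β) * C * ∫ τ in a..b, k τ := by
  refine supNorm_le hab fun t ht => ?_
  rw [Sop_eq_setIntegral_Ioo hab, Sop_eq_setIntegral_Ioo hab, add_sub_add_comm, ← mul_sub]
  refine (abs_add_le _ _).trans (add_le_add ?_ ?_)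
  · obtain ⟨h_nonneg, h_le_one⟩ := rpow_sub_div_sub_mem_Icc hβ hψ hL ht
    rw [abs_mul, abs_of_nonneg h_nonneg]
    exact mul_le_of_le_one_left (abs_nonneg _) h_le_one
  · rw [mul_assoc, mul_comm C, intervalIntegral.integral_of_le hab, integral_Ioc_eq_integral_Ioo,
      ← integral_mul_const]
    exact abs_integral_mul_sub_integral_mul_le (aestronglyMeasurable_G hβ hαβ hψ hψ_cont ht)
      (ae_abs_G_le hβ hαβ hψ hL ht) hx hy (hk.mul_const C)
      (ae_restrict_of_forall_mem measurableSet_Ioo hxy)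

end SolutionOperator

theorem solution_operator_continuous_general
    (a b α β : ℝ) (hab : a ≤ b) (hβ : 0 ≤ β) (hαβ : 1 < α + β)
    (ψ ψd : ℝ → ℝ) (hψ_cont : ContinuousOn ψ (Icc a b))
    (hψ : ∀ t ∈ Ioo a b, HasDerivAt ψ (ψd t) t) (hψd_nonneg : ∀ t ∈ Ioo a b, 0 ≤ ψd t)
    (hL : ψ a < ψ b)
    (f : ℝ → ℝ → ℝ) (𝒢 : (ℝ → ℝ) → ℝ) (κ : ℝ → ℝ) (Φ : ℝ → ℝ → ℝ)
    (h𝒢_cont : ∀ x : ℝ → ℝ, ContinuousOn x (Icc a b) → ∀ ε > 0, ∃ δ > 0,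
      ∀ y : ℝ → ℝ, ContinuousOn y (Icc a b) →
        supNorm a b (fun t => x t - y t) < δ → |𝒢 x - 𝒢 y| < ε)
    (hf_meas : ∀ u : ℝ,
      AEStronglyMeasurable (fun t => f t u) (volume.restrict (Ioo a b)))
    (hf_zero : IntegrableOn (fun t => ψd t * f t 0) (Ioo a b))
    (hκ_nonneg : ∀ t ∈ Ioo a b, 0 ≤ κ t)
    (hκ_int : IntegrableOn (fun t => ψd t * κ t) (Ioo a b))
    (hf_sub : ∀ t ∈ Ioo a b, ∀ u v : ℝ, |f t u - f t v| ≤ κ t * |Φ u v|)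
    (hΦ_cont : Continuous fun p : ℝ × ℝ => Φ p.1 p.2) (hΦ_diag : ∀ u, Φ u u = 0) :
    (∀ x : ℝ → ℝ, ContinuousOn x (Icc a b) →
      ContinuousOn (Sop a b α β ψ ψd f 𝒢 x) (Icc a b)) ∧
    (∀ x y : ℝ → ℝ, ContinuousOn x (Icc a b) → ContinuousOn y (Icc a b) →
      supNorm a b (fun t => Sop a b α β ψ ψd f 𝒢 x t - Sop a b α β ψ ψd f 𝒢 y t) ≤
        |𝒢 x - 𝒢 y| + (ψ b - ψ a) ^ (α + β - 1) / Real.Gamma (α + β) *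
          (⨆ τ : Icc a b, |Φ (x ↑τ) (y ↑τ)|) * ∫ τ in a..b, ψd τ * κ τ) ∧
    (∀ x : ℝ → ℝ, ContinuousOn x (Icc a b) → ∀ ε > 0, ∃ δ > 0,
      ∀ y : ℝ → ℝ, ContinuousOn y (Icc a b) →
        supNorm a b (fun t => x t - y t) < δ →
          supNorm a b (fun t => Sop a b α β ψ ψd f 𝒢 x t -
            Sop a b α β ψ ψd f 𝒢 y t) < ε) := by
  have hψ_mono : MonotoneOn ψ (Icc a b) := by
    refine monotoneOn_of_hasDerivWithinAt_nonneg (f' := ψd) (convex_Icc a b) hψ_cont ?_ ?_ <;>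
      rw [interior_Icc]
    exacts [fun t ht => (hψ t ht).hasDerivWithinAt, hψd_nonneg]
  have hk_nonneg : ∀ τ ∈ Ioo a b, 0 ≤ ψd τ * κ τ := fun τ hτ =>
    mul_nonneg (hψd_nonneg τ hτ) (hκ_nonneg τ hτ)
  have hF_sub : ∀ τ ∈ Ioo a b, ∀ u v,
      |ψd τ * f τ u - ψd τ * f τ v| ≤ ψd τ * κ τ * |Φ u v| := fun τ hτ u v => by
    rw [← mul_sub, abs_mul, abs_of_nonneg (hψd_nonneg τ hτ), mul_assoc]
    exact mul_le_mul_of_nonneg_left (hf_sub τ hτ u v) (hψd_nonneg τ hτ)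
  have hF_int : ∀ x, ContinuousOn x (Icc a b) →
      IntegrableOn (fun τ => ψd τ * f τ (x τ)) (Ioo a b) := fun x hx =>
    integrableOn_comp_of_abs_sub_le (F := fun τ u => ψd τ * f τ u)
      (fun u => (aestronglyMeasurable_of_hasDerivAt measurableSet_Ioo hψ).mul (hf_meas u))
      hF_sub hΦ_cont hΦ_diag hκ_int hk_nonneg hf_zero hx
  have h_estimate : ∀ x y : ℝ → ℝ, ContinuousOn x (Icc a b) → ContinuousOn y (Icc a b) →
      supNorm a b (fun t => Sop a b α β ψ ψd f 𝒢 x t - Sop a b α β ψ ψd f 𝒢 y t) ≤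
        |𝒢 x - 𝒢 y| + (ψ b - ψ a) ^ (α + β - 1) / Real.Gamma (α + β) *
          supNorm a b (fun τ => Φ (x τ) (y τ)) * ∫ τ in a..b, ψd τ * κ τ := fun x y hx hy =>
    supNorm_Sop_sub_le hab hβ hαβ hψ_mono hψ_cont hL (hF_int x hx) (hF_int y hy) hκ_int
      fun τ hτ => (hF_sub τ hτ _ _).trans <| mul_le_mul_of_nonneg_left
        (abs_le_supNorm (x := fun τ => Φ (x τ) (y τ)) (hΦ_cont.comp_continuousOn (hx.prodMk hy))
          (Ioo_subset_Icc_self hτ)) (hk_nonneg τ hτ)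
  have hC : 0 ≤ (ψ b - ψ a) ^ (α + β - 1) / Real.Gamma (α + β) * ∫ τ in a..b, ψd τ * κ τ := by
    rw [intervalIntegral.integral_of_le hab, integral_Ioc_eq_integral_Ioo]
    exact mul_nonneg (div_nonneg (Real.rpow_nonneg (sub_nonneg.2 hL.le) _)
      (Real.Gamma_nonneg_of_nonneg (by linarith))) (setIntegral_nonneg measurableSet_Ioo hk_nonneg)
  exact ⟨fun x hx => continuousOn_Sop hab hβ hαβ hψ_mono hψ_cont hL (hF_int x hx), h_estimate,
    fun x hx ε hε => exists_forall_supNorm_sub_lt hab (h𝒢_cont x hx) hΦ_cont hΦ_diag hx hC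
      (fun y hy => (h_estimate x y hx hy).trans_eq (by rw [mul_right_comm])) hε⟩

theorem solution_operator_continuous
    (a b α β : ℝ) (hab : a < b)
    (hα0 : 0 < α) (hα1 : α ≤ 1) (hβ0 : 0 < β) (hβ1 : β ≤ 1) (hαβ : 1 < α + β)
    (ψ ψd : ℝ → ℝ)
    (hψ : ∀ t ∈ Set.Icc a b, HasDerivAt ψ (ψd t) t)
    (hψd_cont : ContinuousOn ψd (Set.Icc a b))
    (hψd_pos : ∀ t ∈ Set.Icc a b, 0 < ψd t)
    (f : ℝ → ℝ → ℝ) (𝒢 : (ℝ → ℝ) → ℝ)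
    (κ₁ κ₂ : ℝ → ℝ) (Ψ : ℝ → ℝ) (Φ : ℝ → ℝ → ℝ)
    (h𝒢_cont : ∀ x : ℝ → ℝ, ContinuousOn x (Set.Icc a b) → ∀ ε > 0, ∃ δ > 0,
      ∀ y : ℝ → ℝ, ContinuousOn y (Set.Icc a b) →
        supNorm a b (fun t => x t - y t) < δ → |𝒢 x - 𝒢 y| < ε)
    (hf_meas : ∀ u : ℝ,
      AEStronglyMeasurable (fun t => f t u) (volume.restrict (Set.Ioo a b)))
    (hκ₁_meas : AEStronglyMeasurable κ₁ (volume.restrict (Set.Ioo a b)))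
    (hκ₂_meas : AEStronglyMeasurable κ₂ (volume.restrict (Set.Ioo a b)))
    (hκ₁_nonneg : ∀ t ∈ Set.Ioo a b, 0 ≤ κ₁ t)
    (hκ₂_nonneg : ∀ t ∈ Set.Ioo a b, 0 ≤ κ₂ t)
    (hκ₁_int : IntervalIntegrable (fun t => ψd t * κ₁ t) volume a b)
    (hκ₂_int : IntervalIntegrable (fun t => ψd t * κ₂ t) volume a b)
    (hΨ_nonneg : ∀ s ∈ Set.Ici (0 : ℝ), 0 ≤ Ψ s)
    (hΨ_mono : MonotoneOn Ψ (Set.Ici (0 : ℝ)))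
    (hf_growth : ∀ t ∈ Set.Ioo a b, ∀ u : ℝ, |f t u| ≤ κ₁ t * Ψ |u|)
    (hf_lip : ∀ t ∈ Set.Ioo a b, ∀ u v : ℝ, |f t u - f t v| ≤ κ₂ t * |Φ u v|)
    (hΦ_cont : Continuous fun p : ℝ × ℝ => Φ p.1 p.2)
    (hΦ_small : ∀ ε > 0, ∃ δ > 0, ∀ u v : ℝ, |u - v| < δ → |Φ u v| < ε) :
    (∀ x : ℝ → ℝ, ContinuousOn x (Set.Icc a b) →
      ContinuousOn (Sop a b α β ψ ψd f 𝒢 x) (Set.Icc a b)) ∧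
    (∀ x y : ℝ → ℝ, ContinuousOn x (Set.Icc a b) → ContinuousOn y (Set.Icc a b) →
      supNorm a b (fun t => Sop a b α β ψ ψd f 𝒢 x t - Sop a b α β ψ ψd f 𝒢 y t) ≤
        |𝒢 x - 𝒢 y| + (ψ b - ψ a) ^ (α + β - 1) / Real.Gamma (α + β) *
          (⨆ τ : Set.Icc a b, |Φ (x ↑τ) (y ↑τ)|) * ∫ τ in a..b, ψd τ * κ₂ τ) ∧
    (∀ x : ℝ → ℝ, ContinuousOn x (Set.Icc a b) → ∀ ε > 0, ∃ δ > 0,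
      ∀ y : ℝ → ℝ, ContinuousOn y (Set.Icc a b) →
        supNorm a b (fun t => x t - y t) < δ →
          supNorm a b (fun t => Sop a b α β ψ ψd f 𝒢 x t -
            Sop a b α β ψ ψd f 𝒢 y t) < ε) := by
  have hψ_cont : ContinuousOn ψ (Icc a b) := HasDerivAt.continuousOn hψ
  have hψ_Ioo : ∀ t ∈ Ioo a b, HasDerivAt ψ (ψd t) t := fun t ht => hψ t (Ioo_subset_Icc_self ht)
  have hψd_nonneg : ∀ t ∈ Ioo a b, 0 ≤ ψd t := fun t ht => (hψd_pos t (Ioo_subset_Icc_self ht)).le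
  have hL : ψ a < ψ b :=
    strictMonoOn_of_hasDerivWithinAt_pos (convex_Icc a b) hψ_cont
      (fun t ht => (hψ t (interior_subset ht)).hasDerivWithinAt)
      (fun t ht => hψd_pos t (interior_subset ht)) (left_mem_Icc.2 hab.le) (right_mem_Icc.2 hab.le)
      hab
  have hf_zero : IntegrableOn (fun t => ψd t * f t 0) (Ioo a b) := integrable_mul_of_abs_le_mul
    (aestronglyMeasurable_of_hasDerivAt measurableSet_Ioo hψ_Ioo)
    (ae_restrict_of_forall_mem measurableSet_Ioo hψd_nonneg) (hf_meas 0)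
    (ae_restrict_of_forall_mem measurableSet_Ioo fun t ht => hf_growth t ht 0)
    ((intervalIntegrable_iff_integrableOn_Ioo_of_le hab.le).1 hκ₁_int)
  exact solution_operator_continuous_general a b α β hab.le hβ0.le hαβ ψ ψd hψ_cont hψ_Ioo
    hψd_nonneg hL f 𝒢 κ₂ Φ h𝒢_cont hf_meas hf_zero hκ₂_nonneg
    ((intervalIntegrable_iff_integrableOn_Ioo_of_le hab.le).1 hκ₂_int) hf_lip hΦ_cont
    (eq_zero_of_forall_dist_lt_imp_abs_lt hΦ_small)
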